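/- Let α ∈ ℝ_{>0}^K, α₀ = Σ_{j=1}^K α_j, p = α/α₀, let π be a Dirichlet(α)-distributed random vector, and fix a target class index y ∈ {1,…,K} with p_y = α_y/α₀. If p_y ≥ δ for some δ > 0, then |𝔼[−log π_y] − (−log p_y)| ≤ (1 + δ⁻¹)/α₀. -/

import Mathlib

open MeasureTheory ProbabilityTheory

/-!
Write `ψ = Γ'/Γ` for the digamma function. If `X` is Gamma distributed with shape `a` and rate `r`,
then `𝔼[X ^ t] = Γ(a + t) / (Γ(a) r ^ t)`, and differentiating at `t = 0` gives
`𝔼[log X] = ψ(a) - log r`. Since `∑ j, G j` is Gamma distributed with shape `α₀`, this yields the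
exact value `𝔼[-log π_y] = ψ(α₀) - ψ(α_y)`. Log-convexity of `Γ`, applied to the secant of `log Γ`
over `[a, a + 1]`, whose slope is `log a`, gives `log a - 1 / a ≤ ψ(a) ≤ log a`. So `ψ(α₀) - ψ(α_y)`
differs from `log α₀ - log α_y` by at most `1 / α_y`.
-/

open Filter Set Topology
open Real (Gamma log exp)

section Gamma

variable {a b : ℝ}

lemma differentiableAt_Gamma_of_pos (ha : 0 < a) : DifferentiableAt ℝ Gamma a :=
  Real.differentiableAt_Gamma fun m ↦ ((neg_nonpos.2 m.cast_nonneg).trans_lt ha).ne'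

lemma hasDerivAt_log_Gamma (ha : 0 < a) : HasDerivAt (log ∘ Gamma) (logDeriv Gamma a) a :=
  (differentiableAt_Gamma_of_pos ha).hasDerivAt.log (Real.Gamma_pos_of_pos ha).ne'

lemma slope_log_Gamma_add_one (ha : 0 < a) : slope (log ∘ Gamma) a (a + 1) = log a := by
  have hΓ : Gamma a ≠ 0 := (Real.Gamma_pos_of_pos ha).ne'
  simp [slope_def_field, Real.Gamma_add_one ha.ne', Real.log_mul ha.ne' hΓ]

lemma logDeriv_Gamma_add_one (ha : 0 < a) :
    logDeriv Gamma (a + 1) = logDeriv Gamma a + a⁻¹ := by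
  have hshift : HasDerivAt (fun x ↦ log (Gamma (x + 1))) (logDeriv Gamma (a + 1)) a :=
    (hasDerivAt_log_Gamma (by positivity : 0 < a + 1)).comp_add_const a 1
  have hsum : HasDerivAt (fun x ↦ log (Gamma x) + log x) (logDeriv Gamma a + a⁻¹) a :=
    (hasDerivAt_log_Gamma ha).add (Real.hasDerivAt_log ha.ne')
  refine hshift.unique (hsum.congr_of_eventuallyEq ?_)
  filter_upwards [eventually_gt_nhds ha] with x hx
  rw [Real.Gamma_add_one hx.ne', Real.log_mul hx.ne' (Real.Gamma_pos_of_pos hx).ne', add_comm]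

lemma logDeriv_Gamma_le_log (ha : 0 < a) : logDeriv Gamma a ≤ log a := by
  rw [← slope_log_Gamma_add_one ha]
  exact Real.convexOn_log_Gamma.le_slope_of_hasDerivAt ha (by positivity : 0 < a + 1)
    (lt_add_one a) (hasDerivAt_log_Gamma ha)

lemma log_sub_inv_le_logDeriv_Gamma (ha : 0 < a) : log a - a⁻¹ ≤ logDeriv Gamma a := by
  have ha' : 0 < a + 1 := by positivity
  rw [sub_le_iff_le_add, ← logDeriv_Gamma_add_one ha, ← slope_log_Gamma_add_one ha]
  exact Real.convexOn_log_Gamma.slope_le_of_hasDerivAt ha ha' (lt_add_one a)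
    (hasDerivAt_log_Gamma ha')

lemma abs_logDeriv_Gamma_sub_sub_log_div_le (ha : 0 < a) (hab : a ≤ b) :
    |logDeriv Gamma b - logDeriv Gamma a - log (b / a)| ≤ a⁻¹ := by
  have hb : 0 < b := ha.trans_le hab
  have hinv : b⁻¹ ≤ a⁻¹ := inv_anti₀ ha hab
  rw [Real.log_div hb.ne' ha.ne', abs_le]
  constructor <;>
    linarith [logDeriv_Gamma_le_log ha, log_sub_inv_le_logDeriv_Gamma ha,
      logDeriv_Gamma_le_log hb, log_sub_inv_le_logDeriv_Gamma hb]

end Gamma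

section MGF

lemma mem_interior_integrableExpSet_of_eventually_mgf_pos {Ω : Type*} [MeasurableSpace Ω]
    {P : Measure Ω} [NeZero P] {X : Ω → ℝ} {t : ℝ} (h : ∀ᶠ u in 𝓝 t, 0 < mgf X P u) :
    t ∈ interior (integrableExpSet X P) :=
  mem_interior_iff_mem_nhds.2 (h.mono fun _ ↦ mgf_pos_iff.1)

variable {μ ν : Measure ℝ}

lemma eqOn_complexMGF_of_mgf_eventuallyEq {t : ℝ}
    (hμ : t ∈ interior (integrableExpSet id μ)) (hν : t ∈ interior (integrableExpSet id ν))
    (h : mgf id μ =ᶠ[𝓝 t] mgf id ν) :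
    EqOn (complexMGF id μ) (complexMGF id ν)
      {z | z.re ∈ interior (integrableExpSet id μ) ∩ interior (integrableExpSet id ν)} := by
  have hconv : Convex ℝ (interior (integrableExpSet id μ) ∩ interior (integrableExpSet id ν)) :=
    convex_integrableExpSet.interior.inter convex_integrableExpSet.interior
  have hreal : ∃ᶠ x : ℝ in 𝓝[≠] t, complexMGF id μ x = complexMGF id ν x := by
    refine (h.filter_mono nhdsWithin_le_nhds).frequently.mono fun x hx ↦ ?_
    rw [complexMGF_ofReal, complexMGF_ofReal, hx]
  have hofReal : Tendsto ((↑) : ℝ → ℂ) (𝓝[≠] t) (𝓝[≠] (t : ℂ)) :=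
    Complex.ofRealCLM.hasDerivAt.tendsto_nhdsNE (by simp)
  exact (analyticOnNhd_complexMGF.mono fun z hz ↦ hz.1).eqOn_of_preconnected_of_frequently_eq
    (analyticOnNhd_complexMGF.mono fun z hz ↦ hz.2)
    (hconv.linear_preimage Complex.reLm).isPreconnected (z₀ := (t : ℂ)) ⟨hμ, hν⟩
    (hofReal.frequently hreal)

theorem ext_of_mgf_eventuallyEq [IsFiniteMeasure μ] [IsFiniteMeasure ν]
    (hμ : 0 ∈ interior (integrableExpSet id μ)) (h : mgf id μ =ᶠ[𝓝 0] mgf id ν) : μ = ν := by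
  have hmass : μ.real univ = ν.real univ := by simpa using h.self_of_nhds
  have hzero : μ = 0 ↔ ν = 0 := by
    rw [← Measure.measure_univ_eq_zero, ← Measure.measure_univ_eq_zero, ← measureReal_eq_zero_iff,
      ← measureReal_eq_zero_iff, hmass]
  rcases eq_zero_or_neZero μ with hμ0 | hμ0
  · rw [hμ0, hzero.1 hμ0]
  have : NeZero ν := ⟨fun hν0 ↦ hμ0.out (hzero.2 hν0)⟩
  have hν : 0 ∈ interior (integrableExpSet id ν) := by
    apply mem_interior_integrableExpSet_of_eventually_mgf_pos
    filter_upwards [h, mem_interior_iff_mem_nhds.1 hμ] with t ht hint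
    exact ht ▸ mgf_pos_iff.2 hint
  refine Measure.ext_of_charFun (funext fun t ↦ ?_)
  rw [← complexMGF_id_mul_I, ← complexMGF_id_mul_I]
  exact eqOn_complexMGF_of_mgf_eventuallyEq hμ hν h (by simpa using ⟨hμ, hν⟩)

end MGF

section GammaMeasure

variable {a r s t : ℝ}

lemma ae_pos_gammaMeasure (a r : ℝ) : ∀ᵐ x ∂gammaMeasure a r, 0 < x := by
  have hpdf : Measurable (gammaPDF a r) := (measurable_gammaPDFReal a r).ennreal_ofReal
  rw [gammaMeasure, ae_withDensity_iff hpdf]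
  filter_upwards [Measure.ae_ne volume 0] with x hx0 hx
  exact (not_lt.1 fun hneg ↦ hx (gammaPDF_of_neg hneg)).lt_of_ne' hx0

lemma integral_gammaMeasure {E : Type*} [NormedAddCommGroup E] [NormedSpace ℝ E]
    (ha : 0 < a) (hr : 0 < r) (f : ℝ → E) :
    ∫ x, f x ∂gammaMeasure a r =
      ∫ x in Ioi 0, (r ^ a / Gamma a * x ^ (a - 1) * exp (-(r * x))) • f x := by
  have hpdf : Measurable (gammaPDF a r) := (measurable_gammaPDFReal a r).ennreal_ofReal
  rw [gammaMeasure, integral_withDensity_eq_integral_toReal_smul hpdf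
    (ae_of_all _ fun _ ↦ ENNReal.ofReal_lt_top), ← integral_Ici_eq_integral_Ioi,
    ← integral_indicator measurableSet_Ici]
  congr with x
  rw [gammaPDF, ENNReal.toReal_ofReal (gammaPDFReal_nonneg ha hr x)]
  by_cases hx : 0 ≤ x <;> simp [gammaPDFReal, hx]

lemma integral_rpow_mul_exp_gammaMeasure (ha : 0 < a) (hr : 0 < r) (hs : 0 < a + s) (ht : t < r) :
    ∫ x, x ^ s * exp (t * x) ∂gammaMeasure a r =
      r ^ a / Gamma a * ((1 / (r - t)) ^ (a + s) * Gamma (a + s)) := by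
  rw [integral_gammaMeasure ha hr, ← Real.integral_rpow_mul_exp_neg_mul_Ioi hs (sub_pos.2 ht),
    ← integral_const_mul]
  refine setIntegral_congr_fun measurableSet_Ioi fun x (hx : 0 < x) ↦ ?_
  have hpow : x ^ (a + s - 1) = x ^ (a - 1) * x ^ s := by rw [← Real.rpow_add hx]; ring_nf
  have hexp : exp (-((r - t) * x)) = exp (-(r * x)) * exp (t * x) := by
    rw [← Real.exp_add]; ring_nf
  simp only [smul_eq_mul, hpow, hexp]
  ring

lemma mgf_id_gammaMeasure (ha : 0 < a) (hr : 0 < r) (ht : t < r) :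
    mgf id (gammaMeasure a r) t = (r / (r - t)) ^ a := by
  have hΓ : Gamma a ≠ 0 := (Real.Gamma_pos_of_pos ha).ne'
  have h := integral_rpow_mul_exp_gammaMeasure (s := 0) ha hr (by simpa using ha) ht
  simp only [Real.rpow_zero, one_mul, add_zero] at h
  rw [mgf, div_eq_mul_one_div r, Real.mul_rpow hr.le (by simpa using ht.le)]
  simp only [id_eq, h]
  field_simp

lemma mgf_log_gammaMeasure (ha : 0 < a) (hr : 0 < r) (ht : 0 < a + t) :
    mgf log (gammaMeasure a r) t = Gamma (a + t) / (Gamma a * r ^ t) := by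
  have hrpow : (fun x ↦ exp (t * log x)) =ᵐ[gammaMeasure a r] fun x ↦ x ^ t * exp (0 * x) := by
    filter_upwards [ae_pos_gammaMeasure a r] with x hx
    rw [Real.rpow_def_of_pos hx, zero_mul, Real.exp_zero, mul_one, mul_comm]
  have hra : r ^ a ≠ 0 := (Real.rpow_pos_of_pos hr a).ne'
  rw [mgf, integral_congr_ae hrpow, integral_rpow_mul_exp_gammaMeasure ha hr ht hr, sub_zero,
    one_div, Real.inv_rpow hr.le, Real.rpow_add hr]
  field_simp

lemma zero_mem_interior_integrableExpSet_id_gammaMeasure (ha : 0 < a) (hr : 0 < r) :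
    0 ∈ interior (integrableExpSet id (gammaMeasure a r)) := by
  have := isProbabilityMeasure_gammaMeasure ha hr
  apply mem_interior_integrableExpSet_of_eventually_mgf_pos
  filter_upwards [eventually_lt_nhds hr] with t ht
  have := sub_pos.2 ht
  rw [mgf_id_gammaMeasure ha hr ht]
  positivity

lemma zero_mem_interior_integrableExpSet_log_gammaMeasure (ha : 0 < a) (hr : 0 < r) :
    0 ∈ interior (integrableExpSet log (gammaMeasure a r)) := by
  have := isProbabilityMeasure_gammaMeasure ha hr
  apply mem_interior_integrableExpSet_of_eventually_mgf_pos
  filter_upwards [eventually_gt_nhds (neg_neg_iff_pos.2 ha)] with t ht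
  have hat : 0 < a + t := by linarith
  rw [mgf_log_gammaMeasure ha hr hat]
  positivity

lemma integrable_log_gammaMeasure (ha : 0 < a) (hr : 0 < r) :
    Integrable log (gammaMeasure a r) :=
  integrable_of_mem_interior_integrableExpSet
    (zero_mem_interior_integrableExpSet_log_gammaMeasure ha hr)

lemma cgf_log_gammaMeasure (ha : 0 < a) (hr : 0 < r) (ht : 0 < a + t) :
    cgf log (gammaMeasure a r) t = log (Gamma (a + t)) - (log (Gamma a) + t * log r) := by
  rw [cgf, mgf_log_gammaMeasure ha hr ht, Real.log_div (by positivity) (by positivity),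
    Real.log_mul (by positivity) (by positivity), Real.log_rpow hr]

lemma integral_log_gammaMeasure (ha : 0 < a) (hr : 0 < r) :
    ∫ x, log x ∂gammaMeasure a r = logDeriv Gamma a - log r := by
  have := isProbabilityMeasure_gammaMeasure ha hr
  have hcgf : cgf log (gammaMeasure a r) =ᶠ[𝓝 0]
      fun t ↦ log (Gamma (a + t)) - (log (Gamma a) + t * log r) := by
    filter_upwards [eventually_gt_nhds (neg_neg_iff_pos.2 ha)] with t ht
    exact cgf_log_gammaMeasure ha hr (by linarith)
  have hshift : HasDerivAt (fun t ↦ log (Gamma (a + t))) (logDeriv Gamma a) 0 :=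
    HasDerivAt.comp_const_add a 0 (by simpa using hasDerivAt_log_Gamma ha)
  have hderiv : HasDerivAt (cgf log (gammaMeasure a r)) (logDeriv Gamma a - log r) 0 := by
    refine HasDerivAt.congr_of_eventuallyEq (hshift.sub ?_) hcgf
    simpa using ((hasDerivAt_id (0 : ℝ)).mul_const (log r)).const_add (log (Gamma a))
  have hmean := deriv_cgf_zero (zero_mem_interior_integrableExpSet_log_gammaMeasure ha hr)
  rw [hderiv.deriv, probReal_univ, div_one] at hmean
  exact hmean.symm

end GammaMeasure

section GammaLaw

variable {ι Ω : Type*} {mΩ : MeasurableSpace Ω} {P : Measure Ω} {r : ℝ}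

theorem hasLaw_sum_gammaMeasure {X : ι → Ω → ℝ} {a : ι → ℝ} {s : Finset ι} (hs : s.Nonempty)
    (ha : ∀ i, 0 < a i) (hr : 0 < r) (hindep : iIndepFun X P)
    (hX : ∀ i, HasLaw (X i) (gammaMeasure (a i) r) P) :
    HasLaw (∑ i ∈ s, X i) (gammaMeasure (∑ i ∈ s, a i) r) P := by
  have hsum : 0 < ∑ i ∈ s, a i := Finset.sum_pos (fun i _ ↦ ha i) hs
  have hmeas : AEMeasurable (∑ i ∈ s, X i) P :=
    s.aemeasurable_sum fun i _ ↦ (hX i).aemeasurable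
  have := hindep.isProbabilityMeasure
  have := isProbabilityMeasure_gammaMeasure hsum hr
  have := Measure.isProbabilityMeasure_map hmeas
  refine ⟨hmeas, (ext_of_mgf_eventuallyEq
    (zero_mem_interior_integrableExpSet_id_gammaMeasure hsum hr) ?_).symm⟩
  filter_upwards [eventually_lt_nhds hr] with t ht
  have hmgf (i : ι) : mgf (X i) P t = (r / (r - t)) ^ a i := by
    rw [← mgf_id_map (hX i).aemeasurable, (hX i).map_eq, mgf_id_gammaMeasure (ha i) hr ht]
  rw [mgf_id_map hmeas, hindep.mgf_sum₀ fun i ↦ (hX i).aemeasurable,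
    mgf_id_gammaMeasure hsum hr ht, Real.rpow_sum_of_pos (div_pos hr (sub_pos.2 ht))]
  simp only [hmgf]

theorem integral_neg_log_div_of_hasLaw_gammaMeasure {X Y : Ω → ℝ} {a b : ℝ}
    (ha : 0 < a) (hb : 0 < b) (hr : 0 < r)
    (hX : HasLaw X (gammaMeasure a r) P) (hY : HasLaw Y (gammaMeasure b r) P) :
    ∫ ω, -log (X ω / Y ω) ∂P = logDeriv Gamma b - logDeriv Gamma a := by
  have hXint : Integrable (fun ω ↦ log (X ω)) P :=
    (hX.map_eq ▸ integrable_log_gammaMeasure ha hr).comp_aemeasurable hX.aemeasurable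
  have hYint : Integrable (fun ω ↦ log (Y ω)) P :=
    (hY.map_eq ▸ integrable_log_gammaMeasure hb hr).comp_aemeasurable hY.aemeasurable
  have hlog : (fun ω ↦ -log (X ω / Y ω)) =ᵐ[P] fun ω ↦ log (Y ω) - log (X ω) := by
    filter_upwards [ae_of_ae_map hX.aemeasurable (hX.map_eq ▸ ae_pos_gammaMeasure a r),
      ae_of_ae_map hY.aemeasurable (hY.map_eq ▸ ae_pos_gammaMeasure b r)] with ω hXpos hYpos
    rw [Real.log_div hXpos.ne' hYpos.ne', neg_sub]
  calc ∫ ω, -log (X ω / Y ω) ∂P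
      = ∫ ω, log (Y ω) ∂P - ∫ ω, log (X ω) ∂P := by
        rw [integral_congr_ae hlog, integral_sub hYint hXint]
    _ = ∫ x, log x ∂gammaMeasure b r - ∫ x, log x ∂gammaMeasure a r := by
        congr 1
        · exact hY.integral_comp Real.measurable_log.aestronglyMeasurable
        · exact hX.integral_comp Real.measurable_log.aestronglyMeasurable
    _ = logDeriv Gamma b - logDeriv Gamma a := by
        rw [integral_log_gammaMeasure ha hr, integral_log_gammaMeasure hb hr,
          sub_sub_sub_cancel_right]

theorem dirichlet_ce_plugin_bound_general [Fintype ι] {α : ι → ℝ} (hα : ∀ i, 0 < α i) (hr : 0 < r)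
    {G : ι → Ω → ℝ} (hindep : iIndepFun G P) (hG : ∀ i, HasLaw (G i) (gammaMeasure (α i) r) P)
    (y : ι) :
    |(∫ ω, -log (G y ω / ∑ j, G j ω) ∂P) - -log (α y / ∑ j, α j)| ≤ (α y)⁻¹ := by
  have hy : α y ≤ ∑ j, α j :=
    Finset.single_le_sum (fun i _ ↦ (hα i).le) (Finset.mem_univ y)
  have hsum : HasLaw (∑ j, G j) (gammaMeasure (∑ j, α j) r) P :=
    hasLaw_sum_gammaMeasure ⟨y, Finset.mem_univ y⟩ hα hr hindep hG
  have hmean : ∫ ω, -log (G y ω / ∑ j, G j ω) ∂P =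
      logDeriv Gamma (∑ j, α j) - logDeriv Gamma (α y) := by
    simpa using integral_neg_log_div_of_hasLaw_gammaMeasure (hα y) ((hα y).trans_le hy) hr
      (hG y) hsum
  rw [hmean, ← Real.log_inv, inv_div]
  exact abs_logDeriv_Gamma_sub_sub_log_div_le (hα y) hy

end GammaLaw

/-- **Cross-entropy plug-in approximation.**
Let `π` be a Dirichlet(α)-distributed random vector, realized as
`π_i = G_i / (G_1 + ⋯ + G_K)` where the `G_i` are independent Gamma(α_i, 1)
random variables, `α₀ = Σ_j α_j` and `p_y = α_y/α₀`.  If `p_y ≥ δ > 0`, then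
`|𝔼[−log π_y] − (−log p_y)| ≤ (1 + δ⁻¹)/α₀`. -/
theorem dirichlet_ce_plugin_bound {K : ℕ} (hK : 0 < K)
    {Ω : Type*} [MeasurableSpace Ω] (μ : Measure Ω) [IsProbabilityMeasure μ]
    (α : Fin K → ℝ) (hα : ∀ i, 0 < α i)
    (G : Fin K → Ω → ℝ) (hGmeas : ∀ i, Measurable (G i))
    (hGindep : iIndepFun G μ)
    (hGlaw : ∀ i, μ.map (G i) = gammaMeasure (α i) 1)
    (π : Ω → EuclideanSpace ℝ (Fin K))
    (hπ : ∀ ω i, π ω i = G i ω / ∑ j, G j ω)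
    (α₀ : ℝ) (hα₀ : α₀ = ∑ j, α j)
    (y : Fin K) (pY : ℝ) (hpY : pY = α y / α₀)
    (δ : ℝ) (hδ : 0 < δ) (hpYδ : δ ≤ pY) :
    |(∫ ω, -Real.log (π ω y) ∂μ) - (-Real.log pY)| ≤ (1 + δ⁻¹) / α₀ := by
  subst hα₀ hpY
  have hα₀ : 0 < ∑ j, α j := Finset.sum_pos (fun i _ ↦ hα i) ⟨y, Finset.mem_univ y⟩
  simp_rw [hπ]
  calc _ ≤ (α y)⁻¹ := dirichlet_ce_plugin_bound_general hα one_pos hGindep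
        (fun i ↦ ⟨(hGmeas i).aemeasurable, hGlaw i⟩) y
    _ = (α y / ∑ j, α j)⁻¹ / ∑ j, α j := by field_simp
    _ ≤ (1 + δ⁻¹) / ∑ j, α j := by gcongr; linarith [inv_anti₀ hδ hpYδ]
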